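/- (Noise sensitivity of the permanent — the core of the Kalai–Kindler analysis of noisy BosonSampling.) Let A and B be independent n×n random matrices whose entries are independent standard real Gaussian random variables (mean 0, variance 1), let 0 ≤ ρ ≤ 1, and let A_ρ = ρ·A + √(1−ρ²)·B (the ρ-noisy copy of A). Then E[per(A)·per(A_ρ)] = ρⁿ · n!. Combined with E[(per A)²] = n!, this says the correlation between per(A) and per(A_ρ) is ρⁿ, which tends to 0 as n → ∞ whenever 1−ρ is of larger order than 1/n. -/

import Mathlib

open Matrix MeasureTheory ProbabilityTheory

/-!
Expanding both permanents writes the integrand as a sum over pairs of permutations `(τ, σ)` of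
`∏ i, A i (τ i) * (ρ * A i (σ i) + √(1 - ρ²) * B i (σ i))`. The factor with index `i` depends only
on the `i`-th rows of `A` and `B`, and pairs of rows are independent for different `i`
(`integral_prod_rows`). The expectation of each factor is `ρ` if `τ i = σ i` and `0` otherwise
(`integral_row_factor`), so only the `n!` pairs with `τ = σ` survive, each contributing `ρ ^ n`.
-/

/-- The law of a vector of `n` independent standard real Gaussians. -/
noncomputable abbrev stdGaussianPi (n : ℕ) : Measure (Fin n → ℝ) :=
  Measure.pi fun _ : Fin n => gaussianReal 0 1

lemma memLp_eval_stdGaussianPi {n : ℕ} (s : Fin n) :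
    MemLp (fun x : Fin n → ℝ => x s) 2 (stdGaussianPi n) :=
  (memLp_id_gaussianReal' 2 (by simp)).comp_measurePreserving
    (measurePreserving_eval (fun _ : Fin n => gaussianReal 0 1) s)

lemma integral_eval_stdGaussianPi {n : ℕ} (s : Fin n) :
    ∫ x, x s ∂(stdGaussianPi n) = 0 := by
  rw [integral_eval, integral_id_gaussianReal]

lemma integral_eval_mul_eval {n : ℕ} (t s : Fin n) :
    ∫ x, x t * x s ∂(stdGaussianPi n) = if t = s then 1 else 0 := by
  split_ifs with h
  · subst h
    have h2 : ∫ x, x * x ∂(gaussianReal 0 1) = 1 := by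
      have := variance_eq_sub (memLp_id_gaussianReal' (μ := 0) (v := 1) 2 (by simp))
      simpa [pow_two, eq_comm] using this
    exact (integral_comp_eval (μ := fun _ : Fin n => gaussianReal 0 1) (i := t)
      (f := fun x : ℝ => x * x) (by fun_prop)).trans h2
  · have hi : iIndepFun (fun (i : Fin n) (x : Fin n → ℝ) => x i) (stdGaussianPi n) :=
      iIndepFun_pi (X := fun _ => id) (fun _ => aemeasurable_id)
    rw [(hi.indepFun h).integral_fun_mul_eq_mul_integral
      (memLp_eval_stdGaussianPi t).aestronglyMeasurable
      (memLp_eval_stdGaussianPi s).aestronglyMeasurable, integral_eval_stdGaussianPi, zero_mul]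

lemma integrable_eval_mul_eval {n : ℕ} (t s : Fin n) :
    Integrable (fun x : Fin n → ℝ => x t * x s) (stdGaussianPi n) :=
  (memLp_eval_stdGaussianPi t).integrable_mul (memLp_eval_stdGaussianPi s)

lemma integrable_eval_mul_eval_prod {n : ℕ} (t s : Fin n) :
    Integrable (fun q : (Fin n → ℝ) × (Fin n → ℝ) => q.1 t * q.2 s)
      ((stdGaussianPi n).prod (stdGaussianPi n)) :=
  ((memLp_eval_stdGaussianPi t).integrable (by norm_num)).mul_prod
    ((memLp_eval_stdGaussianPi s).integrable (by norm_num))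

lemma integrable_row_factor {n : ℕ} (ρ c : ℝ) (t s : Fin n) :
    Integrable (fun q : (Fin n → ℝ) × (Fin n → ℝ) => q.1 t * (ρ * q.1 s + c * q.2 s))
      ((stdGaussianPi n).prod (stdGaussianPi n)) := by
  have h := (((integrable_eval_mul_eval t s).comp_fst (stdGaussianPi n)).const_mul ρ).add
    ((integrable_eval_mul_eval_prod t s).const_mul c)
  refine h.congr (.of_forall fun q => ?_)
  simp only [Pi.add_apply]
  ring

lemma integral_row_factor {n : ℕ} (ρ c : ℝ) (t s : Fin n) :
    ∫ q : (Fin n → ℝ) × (Fin n → ℝ), q.1 t * (ρ * q.1 s + c * q.2 s)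
      ∂((stdGaussianPi n).prod (stdGaussianPi n)) = if t = s then ρ else 0 := by
  have hexp : ∀ q : (Fin n → ℝ) × (Fin n → ℝ), q.1 t * (ρ * q.1 s + c * q.2 s)
      = ρ * (q.1 t * q.1 s) + c * (q.1 t * q.2 s) := fun q => by ring
  simp_rw [hexp]
  rw [integral_add (((integrable_eval_mul_eval t s).comp_fst (stdGaussianPi n)).const_mul ρ)
      ((integrable_eval_mul_eval_prod t s).const_mul c),
    integral_const_mul, integral_const_mul,
    integral_fun_fst (fun x : Fin n → ℝ => x t * x s),
    integral_prod_mul (fun x : Fin n → ℝ => x t) (fun y : Fin n → ℝ => y s),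
    integral_eval_mul_eval, integral_eval_stdGaussianPi]
  simp

section Rows

variable {n : ℕ} {E : Type*} [MeasurableSpace E] (μ : Measure E) [SigmaFinite μ]

/-- Integrability passes through the regrouping of a pair of families into a family of pairs. -/
lemma integrable_prod_rows {f : Fin n → E × E → ℝ} (hf : ∀ i, Integrable (f i) (μ.prod μ)) :
    Integrable (fun p : (Fin n → E) × (Fin n → E) => ∏ i, f i (p.1 i, p.2 i))
      ((Measure.pi fun _ : Fin n => μ).prod (Measure.pi fun _ : Fin n => μ)) := by
  rw [← (measurePreserving_arrowProdEquivProdArrow E E (Fin n) (fun _ => μ)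
    (fun _ => μ)).integrable_comp_emb (MeasurableEquiv.measurableEmbedding _)]
  exact Integrable.fintype_prod hf

/-- Fubini for a product of factors, each depending on one pair of corresponding coordinates. -/
lemma integral_prod_rows (f : Fin n → E × E → ℝ) :
    ∫ p : (Fin n → E) × (Fin n → E), ∏ i, f i (p.1 i, p.2 i)
      ∂((Measure.pi fun _ : Fin n => μ).prod (Measure.pi fun _ : Fin n => μ))
      = ∏ i, ∫ q, f i q ∂(μ.prod μ) := by
  rw [← (measurePreserving_arrowProdEquivProdArrow E E (Fin n) (fun _ => μ)
    (fun _ => μ)).integral_comp']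
  exact integral_fintype_prod_eq_prod f

end Rows

/-- The permanent, expanded along rows rather than columns as in `Matrix.permanent`. -/
lemma permanent_eq_sum_rows {n : ℕ} (M : Matrix (Fin n) (Fin n) ℝ) :
    M.permanent = ∑ σ : Equiv.Perm (Fin n), ∏ i, M i (σ i) := by
  rw [← permanent_transpose]
  rfl

/-- **Noise sensitivity of the permanent (Kalai–Kindler).**
Let `A` and `B` be independent `n × n` matrices of independent standard real
Gaussians, `0 ≤ ρ ≤ 1`, and `A_ρ = ρ·A + √(1 - ρ²)·B`.  Then
`E[per(A) · per(A_ρ)] = ρⁿ · n!`. -/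
theorem integral_permanent_mul_permanent_noisy (n : ℕ) (ρ : ℝ) (hρ0 : 0 ≤ ρ) (hρ1 : ρ ≤ 1) :
    ∫ p : Matrix (Fin n) (Fin n) ℝ × Matrix (Fin n) (Fin n) ℝ,
        (p.1.permanent) * ((ρ • p.1 + Real.sqrt (1 - ρ ^ 2) • p.2).permanent)
        ∂((Measure.pi fun _ : Fin n => Measure.pi fun _ : Fin n => gaussianReal 0 1).prod
          (Measure.pi fun _ : Fin n => Measure.pi fun _ : Fin n => gaussianReal 0 1))
      = ρ ^ n * (n.factorial : ℝ) := by
  set c := Real.sqrt (1 - ρ ^ 2)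
  have hexp : ∀ p : Matrix (Fin n) (Fin n) ℝ × Matrix (Fin n) (Fin n) ℝ,
      p.1.permanent * (ρ • p.1 + c • p.2).permanent
      = ∑ τ : Equiv.Perm (Fin n), ∑ σ : Equiv.Perm (Fin n),
          ∏ i, (p.1 i (τ i) * (ρ * p.1 i (σ i) + c * p.2 i (σ i))) := fun p => by
    simp_rw [permanent_eq_sum_rows, Finset.sum_mul_sum, Finset.prod_mul_distrib]
    rfl
  simp_rw [hexp]
  let f (τ σ : Equiv.Perm (Fin n)) (i : Fin n) (q : (Fin n → ℝ) × (Fin n → ℝ)) : ℝ :=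
    q.1 (τ i) * (ρ * q.1 (σ i) + c * q.2 (σ i))
  change ∫ p : (Fin n → Fin n → ℝ) × (Fin n → Fin n → ℝ),
      ∑ τ, ∑ σ, ∏ i, f τ σ i (p.1 i, p.2 i)
      ∂((Measure.pi fun _ : Fin n => stdGaussianPi n).prod
        (Measure.pi fun _ : Fin n => stdGaussianPi n)) = _
  have hint (τ σ : Equiv.Perm (Fin n)) :=
    integrable_prod_rows (stdGaussianPi n) (f := f τ σ)
      fun i => integrable_row_factor ρ c (τ i) (σ i)
  rw [integral_finsetSum _ fun τ _ => integrable_finsetSum _ fun σ _ => hint τ σ]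
  have hval (τ σ : Equiv.Perm (Fin n)) :
      ∏ i, ∫ q, f τ σ i q ∂((stdGaussianPi n).prod (stdGaussianPi n))
        = if τ = σ then ρ ^ n else 0 := by
    simp_rw [f, integral_row_factor]
    split_ifs with h
    · simp [h]
    · obtain ⟨i, hi⟩ := not_forall.mp (mt Equiv.ext h)
      exact Finset.prod_eq_zero (Finset.mem_univ i) (if_neg hi)
  simp_rw [integral_finsetSum _ fun σ _ => hint _ σ, integral_prod_rows, hval]
  simp [Fintype.card_perm, mul_comm]
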